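/- arXiv:2404.11407 — 4 statements merged into one kernel-verified Lean document; each statement's English description precedes it below -/
import Mathlib

section
/- Approval-IRV satisfies independence of clones: for every profile P of weak orders with clone set X ⊆ C, letting P̂ be the profile obtained by deleting from every vote all candidates of X except one candidate x̂, it holds that (1) for every c ∉ X, c ∈ ApprovalIRV(P) iff c ∈ ApprovalIRV(P̂), and (2) x̂ ∈ ApprovalIRV(P̂) iff X ∩ ApprovalIRV(P) ≠ ∅. -/
/-!
Let `φ` (`cloneMap`) send every clone to `xhat` and fix all other candidates. Deleting all clones
but `xhat` replaces the candidate set `A` by `A.image φ`, and both claims follow from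
`image φ (winners A) = winners (A.image φ)` (`image_winners`), proved by induction on `A`.

The key facts concern approval scores, to which the lowest-score sets reduce (`mem_lowest`): merging
the clones leaves the score of a non-clone unchanged, and the score of `xhat` after merging is at
least the score of any clone before.

* If `A` contains at most one clone, `φ` is injective on `A` and preserves all scores, so the two
  elimination processes agree step by step.
* If `A` contains at least two clones, eliminating a clone does not change `A.image φ`, while a
  lowest-scoring non-clone of `A` is also lowest-scoring in `A.image φ`. Conversely, if no clone is
  lowest-scoring in `A`, then `xhat` is not lowest-scoring in `A.image φ`, and every lowest-scoring
  candidate there is a non-clone that is lowest-scoring in `A`.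
-/


open Finset

attribute [local instance] Classical.propDecidable

/-- A weak order on a candidate type `C`: a complete and transitive binary relation. -/
structure WeakOrder (C : Type*) where
  rel : C → C → Prop
  total : ∀ a b, rel a b ∨ rel b a
  trans : ∀ a b c, rel a b → rel b c → rel a c

namespace WeakOrder

variable {C : Type*}

/-- Strict preference. -/
def strict (w : WeakOrder C) (a b : C) : Prop :=
  w.rel a b ∧ ¬ w.rel b a

/-- Indifference. -/
def indiff (w : WeakOrder C) (a b : C) : Prop :=
  w.rel a b ∧ w.rel b a

/-- The set of top-ranked candidates of `w` within the candidate set `A`. -/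
noncomputable def topSet (w : WeakOrder C) (A : Finset C) : Finset C :=
  A.filter fun c => ∀ d ∈ A, w.rel c d

variable [DecidableEq C]

/-- Number of candidates in `A` strictly preferred to `a`. -/
noncomputable def cardAbove (w : WeakOrder C) (A : Finset C) (a : C) : ℕ :=
  (A.filter fun b => w.strict b a).card

/-- The (0-based) index of the indifference class of `a` within `A`
(0 = top indifference class). -/
noncomputable def classIdx (w : WeakOrder C) (A : Finset C) (a : C) : ℕ :=
  ((A.filter fun b => w.strict b a).image (w.cardAbove A)).card

/-- The number of indifference classes of `w` on `A`. -/
noncomputable def numClasses (w : WeakOrder C) (A : Finset C) : ℕ :=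
  (A.image (w.cardAbove A)).card

/-- The order type of `w` on `A`: the list of sizes of its indifference classes,
from the top class downwards. -/
noncomputable def orderType (w : WeakOrder C) (A : Finset C) : List ℕ :=
  (List.range (w.numClasses A)).map fun j => (A.filter fun a => w.classIdx A a = j).card

end WeakOrder

/-- Weak order induced by a rank function (smaller rank = more preferred). -/
def ofRank {C : Type*} (ρ : C → ℕ) : WeakOrder C where
  rel a b := ρ a ≤ ρ b
  total a b := le_total _ _
  trans _ _ _ hab hbc := le_trans hab hbc

section Rules

variable {C N : Type*} [DecidableEq C] [Fintype N]

/-- The score of candidate `a` in profile `P` on remaining candidate set `A`,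
under the scoring system `s` (which maps an order type and a 0-based class index
to a real score). -/
noncomputable def totalScore (s : List ℕ → ℕ → ℝ) (P : N → WeakOrder C)
    (A : Finset C) (a : C) : ℝ :=
  ∑ i : N, s ((P i).orderType A) ((P i).classIdx A a)

/-- The set of lowest-scoring candidates in `A`. -/
noncomputable def lowest (s : List ℕ → ℕ → ℝ) (P : N → WeakOrder C)
    (A : Finset C) : Finset C :=
  A.filter fun c => ∀ d ∈ A, totalScore s P A c ≤ totalScore s P A d

/-- Fuel-based helper for the elimination scoring rule. -/
noncomputable def winnersAux (s : List ℕ → ℕ → ℝ) (P : N → WeakOrder C) :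
    ℕ → Finset C → Finset C
  | 0, A => A
  | n + 1, A =>
    if A.card ≤ 1 then A
    else (lowest s P A).biUnion fun c => winnersAux s P n (A.erase c)

/-- The elimination scoring rule associated with scoring system `s`: repeatedly
eliminate a lowest-scoring candidate (parallel-universe tie-breaking) until one
candidate remains. -/
noncomputable def winners (s : List ℕ → ℕ → ℝ) (P : N → WeakOrder C)
    (A : Finset C) : Finset C :=
  winnersAux s P A.card A

/-- Approval score: the number of voters ranking `c` in their top indifference
class within `A`. -/
noncomputable def approvalScore (P : N → WeakOrder C) (A : Finset C) (c : C) : ℕ :=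
  (Finset.univ.filter fun i => c ∈ (P i).topSet A).card

end Rules

/-- The approval scoring system: `s(τ) = (1,0,…,0)` for every order type `τ`
(with `s(τ) = (0)` when `|τ| = 1`). -/
noncomputable def approvalScoring : List ℕ → ℕ → ℝ :=
  fun τ j => if j = 0 ∧ 2 ≤ τ.length then 1 else 0

/-- The split scoring system: `s(τ) = (1/τ(1),0,…,0)` for every order type `τ`
(with `s(τ) = (0)` when `|τ| = 1`). -/
noncomputable def splitScoring : List ℕ → ℕ → ℝ :=
  fun τ j => if j = 0 ∧ 2 ≤ τ.length then ((τ.headI : ℝ))⁻¹ else 0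

/-- The Borda-style scoring system:
`s(τ) = (m−1, m−1−τ(1), …, m−1−∑_{i<k−1} τ(i))` where `m = τ.sum`. -/
noncomputable def bordaScoring : List ℕ → ℕ → ℝ :=
  fun τ j => ((τ.sum : ℝ) - 1) - (((τ.take j).sum : ℕ) : ℝ)

/-- Nonnegativity of a scoring system. -/
def NonnegSys (s : List ℕ → ℕ → ℝ) : Prop := ∀ τ j, 0 ≤ s τ j

/-- The last score value of every (nonempty) order type is zero. -/
def LastZeroSys (s : List ℕ → ℕ → ℝ) : Prop :=
  ∀ τ : List ℕ, τ ≠ [] → s τ (τ.length - 1) = 0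

/-- Monotonicity of a scoring system: earlier indifference classes get weakly
higher scores. -/
def MonotoneSys (s : List ℕ → ℕ → ℝ) : Prop :=
  ∀ τ i j, i ≤ j → s τ j ≤ s τ i

section CloneHoverEtc

variable {C N : Type*}

/-- `X` is a clone set in the profile `P` relative to ambient candidate set `A`. -/
def IsCloneSet (P : N → WeakOrder C) (A X : Finset C) : Prop :=
  X ⊆ A ∧ ∀ i : N, ∀ c ∈ A, c ∉ X →
    (∀ x ∈ X, (P i).strict x c) ∨ (∀ x ∈ X, (P i).indiff x c) ∨
      (∀ x ∈ X, (P i).strict c x)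

/-- `w2` is obtained from `w` by a `c`-hover: `c` is alone in its (non-top)
indifference class in `w`, and in `w2` it is merged into the indifference class
directly above it, everything else being unchanged. -/
def IsCHover (w w2 : WeakOrder C) (c : C) : Prop :=
  (∀ x, x ≠ c → ¬ w.indiff c x) ∧
  (∃ b, w.strict b c) ∧
  (∀ a b, a ≠ c → (w2.rel a b ↔ w.rel a b)) ∧
  (∀ b, w2.rel c b ↔ (w.rel c b ∨ ((w.strict b c) ∧ ∀ y, w.strict y c → w.rel b y)))

/-- The sincere coarsening of `w` merging all candidates strictly preferred to
`b` into a single top indifference class, leaving the rest unchanged. -/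
def mergeAbove (w : WeakOrder C) (b : C) : WeakOrder C where
  rel u v := w.strict u b ∨ (¬ w.strict v b ∧ w.rel u v)
  total u v := by
    by_cases hu : w.strict u b
    · exact Or.inl (Or.inl hu)
    · by_cases hv : w.strict v b
      · exact Or.inr (Or.inl hv)
      · rcases w.total u v with h | h
        · exact Or.inl (Or.inr ⟨hv, h⟩)
        · exact Or.inr (Or.inr ⟨hu, h⟩)
  trans u v x huv hvx := by
    rcases huv with h | ⟨hv, huv⟩
    · exact Or.inl h
    · rcases hvx with h | ⟨hx, hvx⟩
      · exact absurd h hv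
      · exact Or.inr ⟨hx, w.trans _ _ _ huv hvx⟩

/-- Pairwise majority margin of `a` over `b`. -/
noncomputable def margin [Fintype N] (P : N → WeakOrder C) (a b : C) : ℤ :=
  ((Finset.univ.filter fun i => (P i).strict a b).card : ℤ) -
    ((Finset.univ.filter fun i => (P i).strict b a).card : ℤ)

end CloneHoverEtc

section STV

variable {C N : Type*} [DecidableEq C] [Fintype C] [Fintype N]

/-- The supporters of `c` among remaining candidates `R`: voters with `c` in
their top indifference class within `R`. -/
noncomputable def suppSet (P : N → WeakOrder C) (R : Finset C) (c : C) : Finset N :=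
  Finset.univ.filter fun i => ∀ d ∈ R, (P i).rel c d

/-- A state of the Approval-STV computation: remaining candidates, selected
candidates, and the budget of each voter. -/
structure STVState (C N : Type*) where
  R : Finset C
  W : Finset C
  b : N → ℝ

/-- One step of Approval-STV with quota `q`: either select an eligible candidate
(whose supporters hold strictly more than `q` budget), charging its supporters a
total of exactly `q`, or, if no candidate is eligible, eliminate some candidate. -/
inductive STVStep (P : N → WeakOrder C) (q : ℝ) : STVState C N → STVState C N → Prop
  | select (R W : Finset C) (b b' : N → ℝ) (c : C) (hc : c ∈ R)
      (helig : q < ∑ i ∈ suppSet P R c, b i)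
      (hpay : ∀ i ∉ suppSet P R c, b' i = b i)
      (hdec : ∀ i : N, b' i ≤ b i)
      (hnn : ∀ i : N, 0 ≤ b' i)
      (htot : ∑ i ∈ suppSet P R c, b' i = (∑ i ∈ suppSet P R c, b i) - q) :
      STVStep P q ⟨R, W, b⟩ ⟨R.erase c, insert c W, b'⟩
  | eliminate (R W : Finset C) (b : N → ℝ) (c : C) (hc : c ∈ R)
      (hnone : ∀ c' ∈ R, (∑ i ∈ suppSet P R c', b i) ≤ q) :
      STVStep P q ⟨R, W, b⟩ ⟨R.erase c, W, b⟩

/-- `W` is a possible outcome of an execution of Approval-STV with quota `q`: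
starting from all candidates remaining, empty committee and unit budgets, some
sequence of steps ends with no candidate remaining and committee `W`. -/
def IsSTVOutcome (P : N → WeakOrder C) (q : ℝ) (W : Finset C) : Prop :=
  ∃ b : N → ℝ,
    Relation.ReflTransGen (STVStep P q) ⟨Finset.univ, ∅, fun _ => 1⟩ ⟨∅, W, b⟩

/-- The closure of `T` with respect to the voter group `S`. -/
noncomputable def closureSet (P : N → WeakOrder C) (S : Finset N) (T : Finset C) :
    Finset C :=
  Finset.univ.filter fun c => ∃ i ∈ S, ∃ t ∈ T, (P i).rel c t

end STV

/-- A weak order is `T`-supporting if every member of `T` is ranked weakly above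
every non-member. -/
def IsTSupporting {C : Type*} (w : WeakOrder C) (T : Finset C) : Prop :=
  ∀ t ∈ T, ∀ c, c ∉ T → w.rel t c

section CloneIndependence

variable {C N : Type*}

theorem WeakOrder.refl (w : WeakOrder C) (a : C) : w.rel a a := (w.total a a).elim id id

variable [DecidableEq C]

theorem WeakOrder.classIdx_eq_zero_iff (w : WeakOrder C) {A : Finset C} {a : C} :
    w.classIdx A a = 0 ↔ ∀ d ∈ A, w.rel a d := by
  unfold WeakOrder.classIdx
  rw [Finset.card_eq_zero, Finset.image_eq_empty, Finset.filter_eq_empty_iff]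
  refine forall₂_congr fun d _ => ?_
  have := w.total a d
  unfold WeakOrder.strict
  tauto

/-- With a single indifference class, every candidate is top-ranked: a strict preference
would give different values of `cardAbove`. -/
theorem WeakOrder.rel_of_numClasses_lt_two (w : WeakOrder C) {A : Finset C}
    (h : w.numClasses A < 2) {a d : C} (ha : a ∈ A) (hd : d ∈ A) : w.rel a d := by
  by_contra hn
  have hda : w.rel d a := (w.total a d).resolve_left hn
  have heq : w.cardAbove A a = w.cardAbove A d :=
    Finset.card_le_one.mp (Nat.lt_succ_iff.mp h) _ (Finset.mem_image_of_mem _ ha) _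
      (Finset.mem_image_of_mem _ hd)
  have hlt : w.cardAbove A d < w.cardAbove A a := by
    apply Finset.card_lt_card
    rw [Finset.ssubset_iff_of_subset]
    · refine ⟨d, Finset.mem_filter.mpr ⟨hd, hda, hn⟩, fun hmem => ?_⟩
      exact (Finset.mem_filter.mp hmem).2.2 (w.refl d)
    · intro b hb
      obtain ⟨hbA, hb1, hb2⟩ := Finset.mem_filter.mp hb
      exact Finset.mem_filter.mpr
        ⟨hbA, w.trans _ _ _ hb1 hda, fun hab => hb2 (w.trans _ _ _ hda hab)⟩
  omega

variable [Fintype N]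

/-- The approval score differs from the total score by the number of voters with a single
indifference class on `A`, which does not depend on the candidate. -/
theorem totalScore_add_eq (P : N → WeakOrder C) {A : Finset C} {a : C} (ha : a ∈ A) :
    totalScore approvalScoring P A a
        + ∑ i : N, (if (P i).numClasses A < 2 then (1 : ℝ) else 0)
      = (approvalScore P A a : ℝ) := by
  unfold totalScore approvalScore
  rw [← Finset.sum_add_distrib, Finset.card_filter]
  push_cast
  refine Finset.sum_congr rfl fun i _ => ?_
  have hlen : ((P i).orderType A).length = (P i).numClasses A := by
    simp [WeakOrder.orderType]
  have htop : a ∈ (P i).topSet A ↔ ∀ d ∈ A, (P i).rel a d := by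
    simp [WeakOrder.topSet, ha]
  simp only [approvalScoring, hlen, (P i).classIdx_eq_zero_iff, htop]
  by_cases h : (P i).numClasses A < 2
  · have hall : ∀ d ∈ A, (P i).rel a d := fun d hd => (P i).rel_of_numClasses_lt_two h ha hd
    rw [if_neg fun h' => absurd h'.2 (not_le.mpr h), if_pos h, if_pos hall, zero_add]
  · simp [h, not_lt.mp h]

theorem mem_lowest (P : N → WeakOrder C) {A : Finset C} {a : C} :
    a ∈ lowest approvalScoring P A ↔
      a ∈ A ∧ ∀ d ∈ A, approvalScore P A a ≤ approvalScore P A d := by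
  unfold lowest
  rw [Finset.mem_filter]
  refine and_congr_right fun ha => forall₂_congr fun d hd => ?_
  rw [← Nat.cast_le (α := ℝ), ← totalScore_add_eq P ha, ← totalScore_add_eq P hd]
  simp

theorem exists_mem_lowest (P : N → WeakOrder C) {A : Finset C} (hA : A.Nonempty) :
    ∃ a, a ∈ lowest approvalScoring P A := by
  obtain ⟨a, ha, hmin⟩ := Finset.exists_min_image A (approvalScore P A) hA
  exact ⟨a, (mem_lowest P).mpr ⟨ha, hmin⟩⟩

theorem winners_of_card_le_one (s : List ℕ → ℕ → ℝ) (P : N → WeakOrder C) {A : Finset C}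
    (h : A.card ≤ 1) : winners s P A = A := by
  unfold winners
  cases A.card <;> simp [winnersAux, h]

theorem mem_winners (s : List ℕ → ℕ → ℝ) (P : N → WeakOrder C) {A : Finset C}
    (h : 1 < A.card) {w : C} :
    w ∈ winners s P A ↔ ∃ c ∈ lowest s P A, w ∈ winners s P (A.erase c) := by
  obtain ⟨n, hn⟩ : ∃ n, A.card = n + 1 := ⟨A.card - 1, by omega⟩
  have hne : ¬ A.card ≤ 1 := by omega
  unfold winners
  rw [hn, winnersAux, if_neg hne, Finset.mem_biUnion]
  refine exists_congr fun c => and_congr_right fun hc => ?_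
  have hcA : c ∈ A := (Finset.mem_filter.mp hc).1
  rw [Finset.card_erase_of_mem hcA, hn, Nat.add_sub_cancel]

/-- The map sending all clones to the representative `xhat` and fixing all other candidates. -/
noncomputable def cloneMap (X : Finset C) (xhat c : C) : C := if c ∈ X then xhat else c

theorem cloneMap_of_mem {X : Finset C} {xhat c : C} (h : c ∈ X) : cloneMap X xhat c = xhat :=
  if_pos h

theorem cloneMap_of_notMem {X : Finset C} {xhat c : C} (h : c ∉ X) : cloneMap X xhat c = c :=
  if_neg h

theorem approvalScore_le {P : N → WeakOrder C} {A B : Finset C} {a b : C} (ha : a ∈ A)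
    (hb : b ∈ B) (h : ∀ i, (∀ d ∈ A, (P i).rel a d) → ∀ d ∈ B, (P i).rel b d) :
    approvalScore P A a ≤ approvalScore P B b := by
  apply Finset.card_le_card
  intro i
  simpa [WeakOrder.topSet, ha, hb] using h i

section

variable [Fintype C] {P : N → WeakOrder C} {X : Finset C} {xhat : C}

/-- Unless both candidates are clones, `cloneMap` preserves their comparison. -/
theorem rel_cloneMap_iff (hX : IsCloneSet P Finset.univ X) (hxhat : xhat ∈ X) (i : N) {c d : C}
    (h : c ∉ X ∨ d ∉ X) :
    (P i).rel (cloneMap X xhat c) (cloneMap X xhat d) ↔ (P i).rel c d := by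
  have key := hX.2 i
  simp only [WeakOrder.strict, WeakOrder.indiff] at key
  by_cases hc : c ∈ X
  · have hd : d ∉ X := h.resolve_left (not_not.mpr hc)
    rw [cloneMap_of_mem hc, cloneMap_of_notMem hd]
    rcases key d (Finset.mem_univ d) hd with k | k | k <;>
      · have h1 := k c hc
        have h2 := k xhat hxhat
        tauto
  · by_cases hd : d ∈ X
    · rw [cloneMap_of_mem hd, cloneMap_of_notMem hc]
      rcases key c (Finset.mem_univ c) hc with k | k | k <;>
        · have h1 := k d hd
          have h2 := k xhat hxhat
          tauto
    · rw [cloneMap_of_notMem hc, cloneMap_of_notMem hd]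

theorem approvalScore_le_cloneMap (hX : IsCloneSet P Finset.univ X) (hxhat : xhat ∈ X)
    {A : Finset C} {c : C} (hc : c ∈ A) :
    approvalScore P A c ≤ approvalScore P (A.image (cloneMap X xhat)) (cloneMap X xhat c) := by
  refine approvalScore_le hc (Finset.mem_image_of_mem _ hc) fun i htop => ?_
  rw [Finset.forall_mem_image]
  intro d hd
  by_cases h : c ∉ X ∨ d ∉ X
  · exact (rel_cloneMap_iff hX hxhat i h).mpr (htop d hd)
  · push Not at h
    rw [cloneMap_of_mem h.1, cloneMap_of_mem h.2]
    exact (P i).refl _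

/-- Merging the clones preserves the score of every candidate that is not merged with another. -/
theorem approvalScore_cloneMap (hX : IsCloneSet P Finset.univ X) (hxhat : xhat ∈ X)
    {A : Finset C} {c : C} (hc : c ∈ A)
    (hinj : ∀ d ∈ A, cloneMap X xhat d = cloneMap X xhat c → d = c) :
    approvalScore P (A.image (cloneMap X xhat)) (cloneMap X xhat c) = approvalScore P A c := by
  refine le_antisymm ?_ (approvalScore_le_cloneMap hX hxhat hc)
  refine approvalScore_le (Finset.mem_image_of_mem _ hc) hc fun i htop d hd => ?_
  rw [Finset.forall_mem_image] at htop
  by_cases h : c ∉ X ∨ d ∉ X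
  · exact (rel_cloneMap_iff hX hxhat i h).mp (htop hd)
  · push Not at h
    rw [hinj d hd (by rw [cloneMap_of_mem h.1, cloneMap_of_mem h.2])]
    exact (P i).refl _

theorem eq_of_cloneMap_eq (hxhat : xhat ∈ X) {c d : C} (hc : c ∉ X)
    (h : cloneMap X xhat d = cloneMap X xhat c) : d = c := by
  rw [cloneMap_of_notMem hc] at h
  by_cases hd : d ∈ X
  · rw [cloneMap_of_mem hd] at h
    exact absurd (h ▸ hxhat) hc
  · rwa [cloneMap_of_notMem hd] at h

theorem image_erase_of_unique {φ : C → C} {A : Finset C} {c : C}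
    (hinj : ∀ d ∈ A, φ d = φ c → d = c) : (A.erase c).image φ = (A.image φ).erase (φ c) := by
  ext v
  simp only [Finset.mem_image, Finset.mem_erase]
  constructor
  · rintro ⟨d, ⟨hdc, hd⟩, rfl⟩
    exact ⟨fun h => hdc (hinj d hd h), d, hd, rfl⟩
  · rintro ⟨hv, d, hd, rfl⟩
    exact ⟨d, ⟨fun h => hv (h ▸ rfl), hd⟩, rfl⟩

theorem image_erase_of_exists {φ : C → C} {A : Finset C} {c : C}
    (h : ∃ d ∈ A, d ≠ c ∧ φ d = φ c) : (A.erase c).image φ = A.image φ := by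
  obtain ⟨d, hd, hdc, hφ⟩ := h
  refine Finset.Subset.antisymm (Finset.image_subset_image (Finset.erase_subset _ _)) ?_
  intro v hv
  obtain ⟨e, he, rfl⟩ := Finset.mem_image.mp hv
  by_cases hec : e = c
  · exact Finset.mem_image.mpr ⟨d, Finset.mem_erase.mpr ⟨hdc, hd⟩, by rw [hφ, hec]⟩
  · exact Finset.mem_image_of_mem _ (Finset.mem_erase.mpr ⟨hec, he⟩)

/-- The winners after merging the clones are the images of the winners before. -/
theorem image_winners (hX : IsCloneSet P Finset.univ X) (hxhat : xhat ∈ X) (A : Finset C) :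
    (winners approvalScoring P A).image (cloneMap X xhat)
      = winners approvalScoring P (A.image (cloneMap X xhat)) := by
  induction A using Finset.strongInduction with
  | H A ih =>
  set φ := cloneMap X xhat with hφ
  rcases Nat.lt_or_ge 1 A.card with hcard | hcard
  swap
  · rw [winners_of_card_le_one _ P hcard,
      winners_of_card_le_one _ P (Finset.card_image_le.trans hcard)]
  have hmemW : ∀ c ∈ lowest approvalScoring P A, ∀ v,
      v ∈ winners approvalScoring P ((A.erase c).image φ) →
        v ∈ (winners approvalScoring P A).image φ := by
    intro c hc v hv
    rw [← ih _ (Finset.erase_ssubset ((mem_lowest P).mp hc).1)] at hv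
    obtain ⟨w, hw, rfl⟩ := Finset.mem_image.mp hv
    exact Finset.mem_image_of_mem _ ((mem_winners _ P hcard).mpr ⟨c, hc, hw⟩)
  have hWmem : ∀ v ∈ (winners approvalScoring P A).image φ,
      ∃ c ∈ lowest approvalScoring P A,
        v ∈ winners approvalScoring P ((A.erase c).image φ) := by
    intro v hv
    obtain ⟨w, hw, rfl⟩ := Finset.mem_image.mp hv
    obtain ⟨c, hc, hwc⟩ := (mem_winners _ P hcard).mp hw
    refine ⟨c, hc, ?_⟩
    rw [← ih _ (Finset.erase_ssubset ((mem_lowest P).mp hc).1)]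
    exact Finset.mem_image_of_mem _ hwc
  by_cases hinj : ∀ c ∈ A, ∀ d ∈ A, φ d = φ c → d = c
  · -- at most one clone remains: the two elimination processes are isomorphic
    have hcard' : 1 < (A.image φ).card := by
      rwa [Finset.card_image_of_injOn fun c hc d hd h => hinj d hd c hc h]
    have hlow : ∀ c ∈ A, (φ c ∈ lowest approvalScoring P (A.image φ) ↔
        c ∈ lowest approvalScoring P A) := by
      intro c hc
      rw [mem_lowest, mem_lowest, Finset.forall_mem_image]
      simp only [hc, Finset.mem_image_of_mem φ hc, true_and]
      refine forall₂_congr fun d hd => ?_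
      rw [approvalScore_cloneMap hX hxhat hc (hinj c hc),
        approvalScore_cloneMap hX hxhat hd (hinj d hd)]
    ext v
    constructor
    · intro hv
      obtain ⟨c, hc, hvc⟩ := hWmem v hv
      have hcA := ((mem_lowest P).mp hc).1
      rw [image_erase_of_unique (hinj c hcA)] at hvc
      exact (mem_winners _ P hcard').mpr ⟨φ c, (hlow c hcA).mpr hc, hvc⟩
    · intro hv
      obtain ⟨d, hd, hvd⟩ := (mem_winners _ P hcard').mp hv
      obtain ⟨c, hcA, rfl⟩ := Finset.mem_image.mp ((mem_lowest P).mp hd).1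
      rw [← image_erase_of_unique (hinj c hcA)] at hvd
      exact hmemW c ((hlow c hcA).mp hd) v hvd
  · push Not at hinj
    obtain ⟨x, hx, y, hy, hxy, hne⟩ := hinj
    have hxX : x ∈ X := by
      by_contra h
      exact hne (eq_of_cloneMap_eq hxhat h hxy)
    have hyX : y ∈ X := by
      by_contra h
      exact hne (eq_of_cloneMap_eq hxhat h hxy.symm).symm
    have hφx : φ x = xhat := cloneMap_of_mem hxX
    have hφy : φ y = xhat := cloneMap_of_mem hyX
    have herase : ∀ c ∈ X, (A.erase c).image φ = A.image φ := by
      intro c hc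
      have hφc : φ c = xhat := cloneMap_of_mem hc
      apply image_erase_of_exists
      by_cases hcx : x = c
      · exact ⟨y, hy, hcx ▸ hne, by rw [hφy, hφc]⟩
      · exact ⟨x, hx, hcx, by rw [hφx, hφc]⟩
    have hunique : ∀ c ∉ X, ∀ d ∈ A, φ d = φ c → d = c :=
      fun c hc d _ h => eq_of_cloneMap_eq hxhat hc h
    -- a non-clone and `xhat` are two distinct candidates of `A.image φ`
    have hcard' : ∀ c ∈ A, c ∉ X → 1 < (A.image φ).card := by
      intro c hcA hc
      refine Finset.one_lt_card.mpr ⟨φ c, Finset.mem_image_of_mem _ hcA, φ x,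
        Finset.mem_image_of_mem _ hx, fun h => ?_⟩
      exact hc (hunique c hc x hx h.symm ▸ hxX)
    ext v
    constructor
    · intro hv
      obtain ⟨c, hc, hvc⟩ := hWmem v hv
      by_cases hcX : c ∈ X
      · rwa [herase c hcX] at hvc
      · obtain ⟨hcA, hmin⟩ := (mem_lowest P).mp hc
        rw [image_erase_of_unique (hunique c hcX)] at hvc
        refine (mem_winners _ P (hcard' c hcA hcX)).mpr ⟨φ c, (mem_lowest P).mpr
          ⟨Finset.mem_image_of_mem _ hcA, ?_⟩, hvc⟩
        rw [Finset.forall_mem_image]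
        intro d hd
        rw [approvalScore_cloneMap hX hxhat hcA (hunique c hcX)]
        exact (hmin d hd).trans (approvalScore_le_cloneMap hX hxhat hd)
    · intro hv
      by_cases hlowX : ∃ c ∈ lowest approvalScoring P A, c ∈ X
      · obtain ⟨c, hc, hcX⟩ := hlowX
        exact hmemW c hc v (by rwa [herase c hcX])
      · push Not at hlowX
        obtain ⟨a, ha⟩ := exists_mem_lowest P ⟨x, hx⟩
        have haX := hlowX a ha
        obtain ⟨haA, hmin⟩ := (mem_lowest P).mp ha
        obtain ⟨e, he, hve⟩ := (mem_winners _ P (hcard' a haA haX)).mp hv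
        obtain ⟨heA, hemin⟩ := (mem_lowest P).mp he
        obtain ⟨d, hdA, rfl⟩ := Finset.mem_image.mp heA
        have hda := hemin (φ a) (Finset.mem_image_of_mem _ haA)
        rw [approvalScore_cloneMap hX hxhat haA (hunique a haX)] at hda
        -- the score of `d` in `A` is at most that of `φ d` in `A.image φ`, hence at most the minimum
        have hdlow : d ∈ lowest approvalScoring P A :=
          (mem_lowest P).mpr ⟨hdA, fun f hf =>
            ((approvalScore_le_cloneMap hX hxhat hdA).trans hda).trans (hmin f hf)⟩
        rw [← image_erase_of_unique (hunique d (hlowX d hdlow))] at hve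
        exact hmemW d hdlow v hve

end

end CloneIndependence

/-- Approval-IRV satisfies independence of clones: for every
profile `P` of weak orders with clone set `X`, letting `P̂` be the profile
obtained by deleting from every vote all candidates of `X` except `xhat`
(i.e., restricting the candidate set to `univ \ (X.erase xhat)`):
(1) for every `c ∉ X`, `c` wins in `P` iff `c` wins in `P̂`, and
(2) `xhat` wins in `P̂` iff some member of `X` wins in `P`. -/
theorem approvalIRV_independence_of_clones
    {C N : Type*} [Fintype C] [DecidableEq C] [Fintype N]
    (P : N → WeakOrder C) (X : Finset C)
    (hX : IsCloneSet P Finset.univ X) (xhat : C) (hxhat : xhat ∈ X) :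
    (∀ c ∉ X,
      (c ∈ winners approvalScoring P Finset.univ ↔
        c ∈ winners approvalScoring P (Finset.univ \ X.erase xhat))) ∧
    (xhat ∈ winners approvalScoring P (Finset.univ \ X.erase xhat) ↔
      (X ∩ winners approvalScoring P Finset.univ).Nonempty) := by
  have himage : (Finset.univ : Finset C).image (cloneMap X xhat) = Finset.univ \ X.erase xhat := by
    ext v
    simp only [Finset.mem_image, Finset.mem_univ, true_and, Finset.mem_sdiff, Finset.mem_erase,
      not_and]
    constructor
    · rintro ⟨c, rfl⟩ hne
      by_cases hc : c ∈ X
      · exact absurd (cloneMap_of_mem hc) hne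
      · rwa [cloneMap_of_notMem hc]
    · intro hv
      by_cases hvX : v ∈ X
      · have hveq : v = xhat := by
          by_contra hne
          exact hv hne hvX
        exact ⟨xhat, by rw [cloneMap_of_mem hxhat, hveq]⟩
      · exact ⟨v, cloneMap_of_notMem hvX⟩
  rw [← himage, ← image_winners hX hxhat]
  constructor
  · intro c hc
    constructor
    · intro h
      exact Finset.mem_image.mpr ⟨c, h, cloneMap_of_notMem hc⟩
    · intro h
      obtain ⟨w, hw, hwc⟩ := Finset.mem_image.mp h
      rwa [← eq_of_cloneMap_eq hxhat hc (hwc.trans (cloneMap_of_notMem hc).symm)]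
  · constructor
    · intro h
      obtain ⟨w, hw, hwx⟩ := Finset.mem_image.mp h
      refine ⟨w, Finset.mem_inter.mpr ⟨?_, hw⟩⟩
      by_contra hwX
      rw [cloneMap_of_notMem hwX] at hwx
      exact hwX (hwx ▸ hxhat)
    · rintro ⟨w, hw⟩
      obtain ⟨hwX, hwW⟩ := Finset.mem_inter.mp hw
      exact Finset.mem_image.mpr ⟨w, hwW, cloneMap_of_mem hwX⟩
end

section
/- Let P be a profile of weak orders over candidate set C with clone set X ⊆ C, let x ∈ X, and let P − X + x denote the profile obtained from P by deleting all candidates of X except x from every vote. Then: (1) every candidate c ∈ C \ X has the same approval score (number of voters ranking it in their top indifference class) in P and in P − X + x; and (2) the approval score of x in P − X + x is at least as high as the approval score in P of every candidate x′ ∈ X. -/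
/-!
A voter compares an outside candidate with all members of a clone set `X` in the same way, so the
surviving clone `x` can stand in for any deleted one. Hence an outside candidate is top-ranked among
all candidates iff it is top-ranked after the deletion (`IsCloneSet.rel_right_iff`), and if some
clone is top-ranked in the full vote, then `x` is weakly above every outside candidate, i.e.
top-ranked after the deletion (`IsCloneSet.rel_left_iff`). Counting voters gives both claims.
-/

open Finset

attribute [local instance] Classical.propDecidable

/-- For `c` outside a clone set `X`, whether a voter weakly prefers `c` to a member of `X`
does not depend on the member. -/
lemma IsCloneSet.rel_right_iff {C N : Type*} {P : N → WeakOrder C} {A X : Finset C}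
    (hX : IsCloneSet P A X) (i : N) {c x y : C} (hcA : c ∈ A) (hc : c ∉ X)
    (hx : x ∈ X) (hy : y ∈ X) : (P i).rel c x ↔ (P i).rel c y := by
  rcases hX.2 i c hcA hc with h | h | h
  · exact iff_of_false (h x hx).2 (h y hy).2
  · exact iff_of_true (h x hx).2 (h y hy).2
  · exact iff_of_true (h x hx).1 (h y hy).1

/-- For `c` outside a clone set `X`, whether a voter weakly prefers a member of `X` to `c`
does not depend on the member. -/
lemma IsCloneSet.rel_left_iff {C N : Type*} {P : N → WeakOrder C} {A X : Finset C}
    (hX : IsCloneSet P A X) (i : N) {c x y : C} (hcA : c ∈ A) (hc : c ∉ X)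
    (hx : x ∈ X) (hy : y ∈ X) : (P i).rel x c ↔ (P i).rel y c := by
  rcases hX.2 i c hcA hc with h | h | h
  · exact iff_of_true (h x hx).1 (h y hy).1
  · exact iff_of_true (h x hx).1 (h y hy).1
  · exact iff_of_false (h x hx).2 (h y hy).2

/-- Let `X` be a clone set in the profile `P` and `x ∈ X`, and
let `P − X + x` be the profile with all candidates of `X` except `x` deleted
(i.e., restricted to `univ \ (X.erase x)`). Then: (1) every candidate `c ∉ X`
has the same approval score in `P` and in `P − X + x`; and (2) the approval
score of `x` in `P − X + x` is at least the approval score in `P` of every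
`x' ∈ X`. -/
theorem clone_approval_scores
    {C N : Type*} [Fintype C] [DecidableEq C] [Fintype N]
    (P : N → WeakOrder C) (X : Finset C)
    (hX : IsCloneSet P Finset.univ X) (x : C) (hx : x ∈ X) :
    (∀ c ∉ X,
      approvalScore P Finset.univ c =
        approvalScore P (Finset.univ \ X.erase x) c) ∧
    (∀ x' ∈ X,
      approvalScore P Finset.univ x' ≤
        approvalScore P (Finset.univ \ X.erase x) x) := by
  have mem_rest : ∀ d, d ∈ Finset.univ \ X.erase x ↔ d = x ∨ d ∉ X := by
    intro d
    simp only [Finset.mem_sdiff, Finset.mem_univ, Finset.mem_erase, true_and]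
    tauto
  refine ⟨fun c hc => ?_, fun x' hx' => ?_⟩
  · unfold approvalScore
    congr 1
    refine Finset.filter_congr fun i _ => ?_
    simp only [WeakOrder.topSet, Finset.mem_filter, Finset.mem_univ, true_and, mem_rest]
    refine ⟨fun h => ⟨Or.inr hc, fun d _ => h d trivial⟩, fun ⟨_, h⟩ d _ => ?_⟩
    by_cases hd : d ∈ X
    -- A deleted clone `d` is compared with `c` exactly as the surviving clone `x` is.
    · exact (hX.rel_right_iff i (Finset.mem_univ c) hc hx hd).1 (h x (Or.inl rfl))
    · exact h d (Or.inr hd)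
  · unfold approvalScore
    refine Finset.card_le_card (Finset.monotone_filter_right _ fun i _ => ?_)
    simp only [WeakOrder.topSet, Finset.mem_filter, Finset.mem_univ, true_and, mem_rest]
    refine fun h => ⟨Or.inl trivial, fun d hd => ?_⟩
    rcases hd with rfl | hd
    · exact ((P i).total d d).elim id id
    · exact (hX.rel_left_iff i (Finset.mem_univ d) hd hx' hx).1 (h d trivial)
end

section
/- Split-IRV fails independence of clones. Concretely, consider the profile P over candidates {a, b, c, c′} with 9 voters reporting {a,c,c′} ≻ {b}, 4 voters reporting {b} ≻ {a} ≻ {c,c′}, and 2 voters reporting {c,c′} ≻ {a} ≻ {b}. Then X = {c, c′} is a clone set, SplitIRV(P) = {c, c′}, but in the profile P̂ obtained by deleting c′ from every vote, SplitIRV(P̂) = {a}; hence conditions (1) and (2) of independence of clones are violated. -/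
/-!
The elimination runs are short enough to compute. Split-IRV scores are rational, so they can be
replaced by `cloneScore`, in `ℚ`, built from decidable rank comparisons (`totalScore_cloneProfile`),
and each set of lowest-scoring candidates becomes a kernel evaluation (`lowest_cloneProfile`).

* In `P`, the approvals of the 9 voters are split in three: `a` gets `3`, while `b`, `c`, `c′` get
  `4` each, so `a` goes first. Then `b` has `4` against `11/2` for each clone, so `b` goes next.
  All voters are indifferent between `c` and `c′`, which therefore tie at score `0` and both win.
* In `P̂`, the same approvals are split only in two: `a`, `b`, `c` get `9/2`, `4`, `13/2`, so `b`
  goes first. Its 4 voters then support `a` against the 2 voters of `c`, and `a` wins.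
-/

open Finset

attribute [local instance] Classical.propDecidable

/-- The profile over candidates `a = 0`, `b = 1`, `c = 2`, `c′ = 3`:
9 voters `{a,c,c′} ≻ {b}`, 4 voters `{b} ≻ {a} ≻ {c,c′}`,
2 voters `{c,c′} ≻ {a} ≻ {b}`. -/
def cloneProfile : Fin 15 → WeakOrder (Fin 4) := fun i =>
  if i.val < 9 then ofRank ![0, 1, 0, 0]
  else if i.val < 13 then ofRank ![1, 0, 2, 2]
  else ofRank ![1, 2, 0, 0]

/-- The class index of `a` for `ofRank ρ` on `A`, in a form that evaluates in the kernel. -/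
def rankIdx (ρ : Fin 4 → ℕ) (A : Finset (Fin 4)) (a : Fin 4) : ℕ :=
  ((A.filter fun b => ρ b < ρ a).image fun b => (A.filter fun d => ρ d < ρ b).card).card

/-- The order type of `ofRank ρ` on `A`, in a form that evaluates in the kernel. -/
def rankType (ρ : Fin 4 → ℕ) (A : Finset (Fin 4)) : List ℕ :=
  (List.range (A.image fun b => (A.filter fun d => ρ d < ρ b).card).card).map
    fun j => (A.filter fun a => rankIdx ρ A a = j).card

/-- The rational split score that a single vote `ofRank ρ` on `A` gives to `a`. -/
def rankScore (ρ : Fin 4 → ℕ) (A : Finset (Fin 4)) (a : Fin 4) : ℚ :=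
  if rankIdx ρ A a = 0 ∧ 2 ≤ (rankType ρ A).length then ((rankType ρ A).headI : ℚ)⁻¹ else 0

/-- The rational split score of `a` in `cloneProfile` restricted to `A`, with the 15 votes grouped
by ranking. -/
def cloneScore (A : Finset (Fin 4)) (a : Fin 4) : ℚ :=
  9 * rankScore ![0, 1, 0, 0] A a + 4 * rankScore ![1, 0, 2, 2] A a +
    2 * rankScore ![1, 2, 0, 0] A a

lemma ofRank_strict_iff (ρ : Fin 4 → ℕ) (a b : Fin 4) :
    (ofRank ρ).strict a b ↔ ρ a < ρ b := by
  simp only [WeakOrder.strict, ofRank]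
  omega

lemma cardAbove_ofRank (ρ : Fin 4 → ℕ) (A : Finset (Fin 4)) :
    (ofRank ρ).cardAbove A = fun b => (A.filter fun d => ρ d < ρ b).card := by
  funext b
  simp only [WeakOrder.cardAbove, ofRank_strict_iff]

lemma classIdx_ofRank (ρ : Fin 4 → ℕ) (A : Finset (Fin 4)) (a : Fin 4) :
    (ofRank ρ).classIdx A a = rankIdx ρ A a := by
  simp only [WeakOrder.classIdx, rankIdx, ofRank_strict_iff, cardAbove_ofRank]

lemma orderType_ofRank (ρ : Fin 4 → ℕ) (A : Finset (Fin 4)) :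
    (ofRank ρ).orderType A = rankType ρ A := by
  simp only [WeakOrder.orderType, WeakOrder.numClasses, rankType, classIdx_ofRank,
    cardAbove_ofRank]

lemma splitScoring_ofRank (ρ : Fin 4 → ℕ) (A : Finset (Fin 4)) (a : Fin 4) :
    splitScoring ((ofRank ρ).orderType A) ((ofRank ρ).classIdx A a) = (rankScore ρ A a : ℝ) := by
  rw [orderType_ofRank, classIdx_ofRank, splitScoring, rankScore]
  split_ifs <;> simp

lemma totalScore_cloneProfile (A : Finset (Fin 4)) (a : Fin 4) :
    totalScore splitScoring cloneProfile A a = (cloneScore A a : ℝ) := by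
  have h : ∀ i : Fin 15,
      splitScoring ((cloneProfile i).orderType A) ((cloneProfile i).classIdx A a) =
        if i.val < 9 then (rankScore ![0, 1, 0, 0] A a : ℝ)
        else if i.val < 13 then (rankScore ![1, 0, 2, 2] A a : ℝ)
        else (rankScore ![1, 2, 0, 0] A a : ℝ) := by
    intro i
    unfold cloneProfile
    split_ifs <;> exact splitScoring_ofRank _ _ _
  simp only [totalScore, h, Fin.sum_univ_succ, Fin.sum_univ_zero, Fin.val_succ, Fin.val_zero,
    cloneScore]
  norm_num
  ring

lemma lowest_cloneProfile (A : Finset (Fin 4)) :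
    lowest splitScoring cloneProfile A =
      A.filter fun c => ∀ d ∈ A, cloneScore A c ≤ cloneScore A d := by
  simp only [lowest, totalScore_cloneProfile, Rat.cast_le]

/-- One elimination round in which `L` is the set of lowest-scoring candidates. -/
lemma winnersAux_step {n : ℕ} {A L : Finset (Fin 4)} (hA : ¬ A.card ≤ 1)
    (hL : (A.filter fun c => ∀ d ∈ A, cloneScore A c ≤ cloneScore A d) = L) :
    winnersAux splitScoring cloneProfile (n + 1) A =
      L.biUnion fun c => winnersAux splitScoring cloneProfile n (A.erase c) := by
  rw [winnersAux, if_neg hA, lowest_cloneProfile, hL]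

lemma winnersAux_singleton (n : ℕ) (c : Fin 4) :
    winnersAux splitScoring cloneProfile n {c} = {c} := by
  cases n <;> simp [winnersAux]

lemma winners_full : winners splitScoring cloneProfile Finset.univ = {2, 3} := by
  rw [winners, Finset.card_univ, Fintype.card_fin,
    winnersAux_step (L := {0}) (by decide) (by decide +kernel), Finset.singleton_biUnion,
    show (Finset.univ : Finset (Fin 4)).erase 0 = {1, 2, 3} by decide,
    winnersAux_step (L := {1}) (by decide) (by decide +kernel), Finset.singleton_biUnion,
    show ({1, 2, 3} : Finset (Fin 4)).erase 1 = {2, 3} by decide,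
    winnersAux_step (L := {2, 3}) (by decide) (by decide +kernel),
    Finset.biUnion_insert, Finset.singleton_biUnion,
    show ({2, 3} : Finset (Fin 4)).erase 2 = {3} by decide,
    show ({2, 3} : Finset (Fin 4)).erase 3 = {2} by decide,
    winnersAux_singleton, winnersAux_singleton]
  decide

lemma winners_deleted :
    winners splitScoring cloneProfile
      (Finset.univ \ ({2, 3} : Finset (Fin 4)).erase 2) = {0} := by
  rw [show Finset.univ \ ({2, 3} : Finset (Fin 4)).erase 2 = {0, 1, 2} by decide, winners,
    show ({0, 1, 2} : Finset (Fin 4)).card = 3 by decide,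
    winnersAux_step (L := {1}) (by decide) (by decide +kernel), Finset.singleton_biUnion,
    show ({0, 1, 2} : Finset (Fin 4)).erase 1 = {0, 2} by decide,
    winnersAux_step (L := {2}) (by decide) (by decide +kernel), Finset.singleton_biUnion,
    show ({0, 2} : Finset (Fin 4)).erase 2 = {0} by decide, winnersAux_singleton]

lemma isCloneSet_cloneProfile : IsCloneSet cloneProfile Finset.univ {2, 3} := by
  refine ⟨Finset.subset_univ _, fun i c _ hc => ?_⟩
  unfold cloneProfile
  split_ifs <;> fin_cases c <;> simp [WeakOrder.strict, WeakOrder.indiff, ofRank] at hc ⊢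

/-- Split-IRV fails independence of clones: in `cloneProfile`,
`X = {c, c′} = {2, 3}` is a clone set, `SplitIRV(P) = {c, c′}`, but after
deleting the clone `c′ = 3` (keeping `xhat = c = 2`), `SplitIRV(P̂) = {a}`;
hence both conditions of independence of clones are violated. -/
theorem splitIRV_fails_independence_of_clones :
    IsCloneSet cloneProfile Finset.univ {2, 3} ∧
    winners splitScoring cloneProfile Finset.univ = {2, 3} ∧
    winners splitScoring cloneProfile
      (Finset.univ \ ({2, 3} : Finset (Fin 4)).erase 2) = {0} ∧
    ¬ (∀ c ∉ ({2, 3} : Finset (Fin 4)),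
        (c ∈ winners splitScoring cloneProfile Finset.univ ↔
          c ∈ winners splitScoring cloneProfile
            (Finset.univ \ ({2, 3} : Finset (Fin 4)).erase 2))) ∧
    ¬ ((2 : Fin 4) ∈ winners splitScoring cloneProfile
          (Finset.univ \ ({2, 3} : Finset (Fin 4)).erase 2) ↔
        (({2, 3} : Finset (Fin 4)) ∩
          winners splitScoring cloneProfile Finset.univ).Nonempty) := by
  refine ⟨isCloneSet_cloneProfile, winners_full, winners_deleted, ?_, ?_⟩ <;>
    rw [winners_full, winners_deleted] <;> decide
end

section
/- No C2 voting rule respects cohesive majorities: for every voting rule f on profiles of weak orders over a candidate set with at least 3 candidates, if f is C2 (its winner set depends only on the pairwise majority margins), then f does not respect cohesive majorities. In particular, on the 5-voter profile over {a,b,c} consisting of one vote {a} ≻ {c} ≻ {b}, two votes {a,b} ≻ {c}, and two votes {c} ≻ {b} ≻ {a}, whose majority margins form a cycle a→c→b→a each with margin 1, any C2 rule must violate the cohesive-majority requirement for some renaming of the candidates. -/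
/-!
Fix three distinct candidates `a`, `b`, `c` and consider the five votes
`a ≻ c ≻ b`, twice `{a, b} ≻ c`, and twice `c ≻ b ≻ a`, with all remaining candidates tied at the
bottom. The margins form a cycle `a → c → b → a`, each of margin `1`, so the profiles obtained by
rotating the three candidates along this cycle all have the same margins, and a C2 rule returns the
same winner set `W` on all of them (`margin_cyclicProfile`). In the original profile the first three
voters have `a` as a common top candidate and approve only `a` and `b`, so `W ⊆ {a, b}`. The two
rotations likewise give `W ⊆ {c, a}` and `W ⊆ {b, c}`. These three sets have empty intersection,
contradicting nonemptiness of `W`.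
-/

open Finset

attribute [local instance] Classical.propDecidable

/-- The rank that voter `i` gives to the candidate labelled `t` in the `k`-th rotation of the
five-voter profile. Labels `0`, `1`, `2` stand for `a`, `b`, `c`, and label `3` for every other
candidate; smaller rank is better. -/
def cyclicRank (k : Fin 3) (i : Fin 5) (t : Fin 4) : ℕ :=
  if h : t.val < 3 then
    (![![0, 2, 1], ![0, 0, 1], ![0, 0, 1], ![2, 1, 0], ![2, 1, 0]] : Fin 5 → Fin 3 → ℕ) i
      (⟨t.val, h⟩ + k)
  else 3

/-- The margin between two labels is the same in every rotation. -/
lemma labelMargin_rotate : ∀ (k : Fin 3) (s t : Fin 4),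
    ((univ.filter fun i => cyclicRank 0 i s < cyclicRank 0 i t).card : ℤ) -
      ((univ.filter fun i => cyclicRank 0 i t < cyclicRank 0 i s).card : ℤ) =
    ((univ.filter fun i => cyclicRank k i s < cyclicRank k i t).card : ℤ) -
      ((univ.filter fun i => cyclicRank k i t < cyclicRank k i s).card : ℤ) := by
  decide

/-- In the `k`-th rotation, the label `-k` is a common top of the first three voters. -/
lemma cyclicRank_top : ∀ (k : Fin 3) (i : Fin 5), i.val < 3 →
    cyclicRank k i (-k).castSucc = 0 := by
  decide

/-- No label is ranked first by one of the first three voters in every rotation. -/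
lemma no_label_always_top : ∀ t : Fin 4, ¬ ∀ k : Fin 3,
    ∃ i : Fin 5, i.val < 3 ∧ cyclicRank k i t = 0 := by
  decide

lemma card_first_three : (univ.filter fun i : Fin 5 => i.val < 3).card = 3 := by
  decide

/-- The `k`-th rotation of the five-voter profile, for candidates labelled by `κ`. -/
def cyclicProfile {C : Type*} (κ : C → Fin 4) (k : Fin 3) : Fin 5 → WeakOrder C :=
  fun i => ofRank fun d => cyclicRank k i (κ d)

/-- The margins of the profile are invariant under the rotation. -/
lemma margin_cyclicProfile {C : Type*} (κ : C → Fin 4) (k : Fin 3) (u v : C) :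
    margin (cyclicProfile κ 0) u v = margin (cyclicProfile κ k) u v := by
  have strict_iff : ∀ (k : Fin 3) (i : Fin 5) (u v : C),
      (cyclicProfile κ k i).strict u v ↔ cyclicRank k i (κ u) < cyclicRank k i (κ v) :=
    fun k i u v => lt_iff_le_not_ge.symm
  simp only [margin, strict_iff]
  convert labelMargin_rotate k (κ u) (κ v)

lemma mem_topSet_cyclicProfile {C : Type*} [Fintype C] (κ : C → Fin 4) (k : Fin 3) (i : Fin 5)
    (x : C) : x ∈ (cyclicProfile κ k i).topSet univ ↔
      ∀ d, cyclicRank k i (κ x) ≤ cyclicRank k i (κ d) := by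
  simp [WeakOrder.topSet, cyclicProfile, ofRank]

/-- No C2 voting rule respects cohesive majorities: for every
candidate set with at least 3 candidates and every voting rule `f` (defined on
profiles with any number of voters, always returning a nonempty winner set)
whose output depends only on the pairwise majority margins, `f` fails respect
for cohesive majorities. -/
theorem no_C2_rule_respects_cohesive_majorities
    {C : Type*} [Fintype C] [DecidableEq C] (h3 : 3 ≤ Fintype.card C)
    (f : ∀ n : ℕ, (Fin n → WeakOrder C) → Finset C)
    (hne : ∀ (n : ℕ) (P : Fin n → WeakOrder C), (f n P).Nonempty)
    (hC2 : ∀ (n : ℕ) (P P' : Fin n → WeakOrder C),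
      (∀ a b, margin P a b = margin P' a b) → f n P = f n P') :
    ¬ (∀ (n : ℕ) (P : Fin n → WeakOrder C) (S : Finset (Fin n)),
        n < 2 * S.card →
        (∃ c, ∀ i ∈ S, c ∈ (P i).topSet Finset.univ) →
        f n P ⊆ S.biUnion fun i => (P i).topSet Finset.univ) := by
  intro hcoh
  obtain ⟨a, b, c, hab, hac, hbc⟩ := Fintype.two_lt_card_iff.mp h3
  let κ : C → Fin 4 := fun d => if d = a then 0 else if d = b then 1 else if d = c then 2 else 3
  have label_surj : ∀ t : Fin 3, ∃ x : C, κ x = t.castSucc := by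
    intro t
    fin_cases t
    · exact ⟨a, by simp [κ]⟩
    · exact ⟨b, by simp [κ, hab.symm]⟩
    · exact ⟨c, by simp [κ, hac.symm, hbc.symm]⟩
  have winner_top : ∀ (k : Fin 3), ∀ w ∈ f 5 (cyclicProfile κ 0),
      ∃ i : Fin 5, i.val < 3 ∧ cyclicRank k i (κ w) = 0 := by
    intro k w hw
    obtain ⟨x, hx⟩ := label_surj (-k)
    have hx_top : ∀ i : Fin 5, i.val < 3 → cyclicRank k i (κ x) = 0 := fun i hi =>
      hx ▸ cyclicRank_top k i hi
    rw [hC2 5 _ _ (margin_cyclicProfile κ k)] at hw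
    have hcard : 5 < 2 * (univ.filter fun i : Fin 5 => i.val < 3).card := by
      have := card_first_three
      simp only [this]
      norm_num
    have hmem := hcoh 5 (cyclicProfile κ k) _ hcard
      ⟨x, fun i hi => (mem_topSet_cyclicProfile κ k i x).mpr fun d =>
        (hx_top i (mem_filter.mp hi).2).le.trans (Nat.zero_le _)⟩ hw
    obtain ⟨i, hi, hwi⟩ := mem_biUnion.mp hmem
    have hi3 := (mem_filter.mp hi).2
    have hle : cyclicRank k i (κ w) ≤ cyclicRank k i (κ x) :=
      (mem_topSet_cyclicProfile κ k i w).mp hwi x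
    exact ⟨i, hi3, Nat.le_zero.mp (hle.trans (hx_top i hi3).le)⟩
  obtain ⟨w, hw⟩ := hne 5 (cyclicProfile κ 0)
  exact no_label_always_top (κ w) fun k => winner_top k w hw
end
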